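/- arXiv:2604.10395 — 3 statements merged into one kernel-verified Lean document; each statement's English description precedes it below -/
import Mathlib

section
/- The function h(x) := (log Γ(x+1))/x is strictly increasing on (0,∞). -/
/-!
The functional equation `log Γ(x + 1) = log Γ(x) + log x` upgrades the convexity of `log Γ` to
strict convexity, because `log` is strictly concave. As `log Γ(1) = 0`, the value `h x` is the slope
of the chord of `log Γ` from `1` to `x + 1`, and the chords of a strictly convex function from
a fixed point have strictly increasing slopes.
-/

open Real

/-- `h x = log Γ(x+1) / x`. -/
noncomputable def hGamma (x : ℝ) : ℝ := Real.log (Real.Gamma (x + 1)) / x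

section OrderedModule

variable {𝕜 E β : Type*} [Semiring 𝕜] [PartialOrder 𝕜] [AddCommGroup E] [Module 𝕜 E]
  [AddCommGroup β] [PartialOrder β] [IsOrderedAddMonoid β] [Module 𝕜 β]

theorem strictConvexOn_of_map_add_eq_add {s : Set E} {f g : E → β} {c : E}
    (hf : ConvexOn 𝕜 s f) (hg : StrictConcaveOn 𝕜 s g) (hs : ∀ x ∈ s, x + c ∈ s)
    (hfg : ∀ x ∈ s, f (x + c) = f x + g x) : StrictConvexOn 𝕜 s f := by
  have hsub : s ⊆ (c + ·) ⁻¹' s := fun x hx => by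
    simpa only [Set.mem_preimage, add_comm c] using hs x hx
  have hshift : ConvexOn 𝕜 s (f ∘ (· + c)) := (hf.translate_left c).subset hsub hf.1
  exact (hshift.sub_strictConcaveOn hg).congr fun x hx => sub_eq_of_eq_add (hfg x hx)

end OrderedModule

theorem strictMonoOn_slope_of_strictConvexOn {𝕜 : Type*} [Field 𝕜] [LinearOrder 𝕜]
    [IsStrictOrderedRing 𝕜] {s : Set 𝕜} {f : 𝕜 → 𝕜} {a : 𝕜} (hf : StrictConvexOn 𝕜 s f)
    (ha : a ∈ s) : StrictMonoOn (slope f a) (s \ {a}) := by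
  intro x hx y hy hxy
  simpa only [slope_def_field] using hf.secant_strict_mono ha hx.1 hy.1 hx.2 hy.2 hxy

theorem log_Gamma_add_one {x : ℝ} (hx : ∀ m : ℕ, x ≠ -m) :
    log (Gamma (x + 1)) = log (Gamma x) + log x := by
  have hx₀ : x ≠ 0 := by simpa using hx 0
  rw [Gamma_add_one hx₀, log_mul hx₀ (Gamma_ne_zero hx), add_comm]

theorem strictConvexOn_log_Gamma : StrictConvexOn ℝ (Set.Ioi 0) (log ∘ Gamma) := by
  refine strictConvexOn_of_map_add_eq_add (c := 1) convexOn_log_Gamma strictConcaveOn_log_Ioi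
    (fun x hx => ?_) (fun x hx => log_Gamma_add_one fun m => ?_)
  · exact Set.mem_Ioi.2 (add_pos hx one_pos)
  · exact ((neg_nonpos.2 m.cast_nonneg).trans_lt hx).ne'

theorem hGamma_eq_slope (x : ℝ) : hGamma x = slope (log ∘ Gamma) 1 (x + 1) := by
  simp [hGamma, slope_def_field]

theorem hGamma_strictMonoOn_general : StrictMonoOn hGamma (Set.Ioi (-1) \ {0}) := by
  have hslope : StrictMonoOn (slope (log ∘ Gamma) 1) (Set.Ioi 0 \ {1}) :=
    strictMonoOn_slope_of_strictConvexOn strictConvexOn_log_Gamma (Set.mem_Ioi.2 one_pos)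
  have hmaps : Set.MapsTo (· + 1) (Set.Ioi (-1 : ℝ) \ {0}) (Set.Ioi 0 \ {1}) := fun x hx =>
    ⟨neg_lt_iff_pos_add.1 (Set.mem_Ioi.1 hx.1), add_eq_right.not.2 hx.2⟩
  exact (hslope.comp (add_left_strictMono.strictMonoOn _) hmaps).congr
    fun x _ => (hGamma_eq_slope x).symm

/-- The function `h(x) = log Γ(x+1) / x` is strictly increasing on `(0,∞)`. -/
theorem hGamma_strictMonoOn : StrictMonoOn hGamma (Set.Ioi 0) :=
  hGamma_strictMonoOn_general.mono fun _ hx =>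
    ⟨Set.mem_Ioi.2 (neg_one_lt_zero.trans hx), (Set.mem_Ioi.1 hx).ne'⟩
end

section
/- Fix α > 0 and set a_n := (h(nα) − h(α))/log n for n ≥ 2, where h(x) := (log Γ(x+1))/x. Then a_n < 1 for every n ≥ 2, and lim_{n→∞} a_n = 1. -/
open Real Filter

/-!
Put `f t = e⁻ᵗ tˣ` and let `G t = ∫_t^∞ f` be its tail, so that `G 0 = Γ(x + 1)`. As `s ↦ sˣ` is
increasing, `f t = ∫_t^∞ e⁻ˢ tˣ ds < G t`. Hence, for `c > 1`,
`c ∫ f ^ c < c ∫ f G ^ (c - 1) = ∫ -(G ^ c)' = G 0 ^ c = Γ(x + 1) ^ c`,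
while substituting `t ↦ c t` in Euler's integral gives `Γ(c x + 1) = c ^ (c x) * (c ∫ f ^ c)`.
Taking logarithms, `h(c x) - h(x) < log c`. The same inequality `f t < G t` at `t = x` yields
`e⁻ˣ xˣ < Γ(x + 1)`, i.e. `h(x) > log x - 1`, and the limit follows by squeezing.
-/

open MeasureTheory Set Topology

section TailIntegral

lemma setIntegral_lt_setIntegral_of_forall_lt {X : Type*} [MeasurableSpace X] {μ : Measure X}
    {s : Set X} {f g : X → ℝ} (hs : MeasurableSet s) (hμs : μ s ≠ 0) (hf : IntegrableOn f s μ)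
    (hg : IntegrableOn g s μ) (hfg : ∀ x ∈ s, f x < g x) :
    ∫ x in s, f x ∂μ < ∫ x in s, g x ∂μ := by
  have hpos : ∀ x ∈ s, 0 < (g - f) x := fun x hx => sub_pos.2 (hfg x hx)
  have hsupp : s ⊆ Function.support (g - f) := fun x hx => (hpos x hx).ne'
  rw [← sub_pos, ← integral_sub hg hf]
  refine (setIntegral_pos_iff_support_of_nonneg_ae
    (ae_restrict_of_forall_mem hs fun x hx => (hpos x hx).le) (hg.sub hf)).2 ?_
  rwa [inter_eq_right.2 hsupp, pos_iff_ne_zero]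

lemma hasDerivAt_setIntegral_Ioi {E : Type*} [NormedAddCommGroup E] [NormedSpace ℝ E]
    [CompleteSpace E] {f : ℝ → E} {a t : ℝ} (hf : IntegrableOn f (Ioi a)) (hat : a < t)
    (hft : ContinuousAt f t) : HasDerivAt (fun u => ∫ s in Ioi u, f s) (-f t) t := by
  have hmeas : StronglyMeasurableAtFilter f (𝓝 t) :=
    ⟨Ioi a, Ioi_mem_nhds hat, hf.aestronglyMeasurable⟩
  have hprim : HasDerivAt (fun u => ∫ s in t..u, f s) (f t) t :=
    intervalIntegral.integral_hasDerivAt_right .refl hmeas hft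
  refine (hprim.const_sub (∫ s in Ioi t, f s)).congr_of_eventuallyEq ?_
  filter_upwards [Ioi_mem_nhds hat] with u hau
  rw [← intervalIntegral.integral_interval_add_Ioi (hf.mono_set (Ioi_subset_Ioi hat.le))
    (hf.mono_set (Ioi_subset_Ioi (le_of_lt hau))), add_sub_cancel_left]

variable {f : ℝ → ℝ} {a c : ℝ}

lemma hasDerivAt_neg_setIntegral_Ioi_rpow {t : ℝ} (hf : IntegrableOn f (Ioi a)) (hat : a < t)
    (hft : ContinuousAt f t) (hc : 1 ≤ c) :
    HasDerivAt (fun u => -(∫ s in Ioi u, f s) ^ c)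
      (c * (f t * (∫ s in Ioi t, f s) ^ (c - 1))) t :=
  ((hasDerivAt_setIntegral_Ioi hf hat hft).rpow_const (.inr hc)).neg.congr_deriv (by ring)

lemma tendsto_neg_setIntegral_Ioi_rpow_atTop (hc : 0 < c) :
    Tendsto (fun t => -(∫ s in Ioi t, f s) ^ c) atTop (𝓝 0) := by
  have hpow := (tendsto_integral_Ioi_zero (f := f) (μ := volume) tendsto_id).rpow_const (.inr hc.le)
  simpa [zero_rpow hc.ne'] using hpow.neg

lemma integrableOn_and_integral_mul_tail_rpow (hc : 1 ≤ c) (hf : IntegrableOn f (Ioi a))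
    (hcont : ContinuousOn f (Ioi a)) (hnonneg : ∀ t ∈ Ioi a, 0 ≤ f t) :
    IntegrableOn (fun t => c * (f t * (∫ s in Ioi t, f s) ^ (c - 1))) (Ioi a) ∧
    ∫ t in Ioi a, c * (f t * (∫ s in Ioi t, f s) ^ (c - 1)) = (∫ t in Ioi a, f t) ^ c := by
  have hc0 : 0 < c := one_pos.trans_le hc
  have hderiv : ∀ t ∈ Ioi a, HasDerivAt (fun u => -(∫ s in Ioi u, f s) ^ c)
      (c * (f t * (∫ s in Ioi t, f s) ^ (c - 1))) t := fun t ht =>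
    hasDerivAt_neg_setIntegral_Ioi_rpow hf ht (hcont.continuousAt (Ioi_mem_nhds ht)) hc
  have hderiv_nonneg : ∀ t ∈ Ioi a, 0 ≤ c * (f t * (∫ s in Ioi t, f s) ^ (c - 1)) := fun t ht => by
    have hft : 0 ≤ f t := hnonneg t ht
    have htail : 0 ≤ ∫ s in Ioi t, f s :=
      setIntegral_nonneg measurableSet_Ioi fun s hs => hnonneg s (Ioi_subset_Ioi (le_of_lt ht) hs)
    positivity
  have hcont_a : ContinuousWithinAt (fun u => -(∫ s in Ioi u, f s) ^ c) (Ici a) a :=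
    (hf.continuousWithinAt_Ici_primitive_Ioi.rpow_const (.inr hc0.le)).neg
  have hlim := tendsto_neg_setIntegral_Ioi_rpow_atTop (f := f) hc0
  refine ⟨integrableOn_Ioi_deriv_of_nonneg hcont_a hderiv hderiv_nonneg hlim, ?_⟩
  rw [integral_Ioi_of_hasDerivAt_of_nonneg hcont_a hderiv hderiv_nonneg hlim, zero_sub, neg_neg]

lemma mul_integral_rpow_lt_rpow_integral_of_lt_tail (hc : 1 < c) (hf : IntegrableOn f (Ioi a))
    (hcont : ContinuousOn f (Ioi a)) (hpos : ∀ t ∈ Ioi a, 0 < f t)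
    (htail : ∀ t ∈ Ioi a, f t < ∫ s in Ioi t, f s) :
    c * ∫ t in Ioi a, f t ^ c < (∫ t in Ioi a, f t) ^ c := by
  have hc0 : 0 < c := one_pos.trans hc
  have hlt : ∀ t ∈ Ioi a, c * f t ^ c < c * (f t * (∫ s in Ioi t, f s) ^ (c - 1)) := fun t ht => by
    have hft : 0 < f t := hpos t ht
    have hrpow : f t ^ (c - 1) < (∫ s in Ioi t, f s) ^ (c - 1) :=
      rpow_lt_rpow hft.le (htail t ht) (sub_pos.2 hc)
    calc c * f t ^ c = c * (f t * f t ^ (c - 1)) := by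
          rw [mul_comm (f t), ← rpow_add_one hft.ne', sub_add_cancel]
      _ < c * (f t * (∫ s in Ioi t, f s) ^ (c - 1)) := by gcongr
  obtain ⟨hint, hint_eq⟩ :=
    integrableOn_and_integral_mul_tail_rpow hc.le hf hcont fun t ht => (hpos t ht).le
  have hint_rpow : IntegrableOn (fun t => c * f t ^ c) (Ioi a) := by
    refine hint.mono' ?_ (ae_restrict_of_forall_mem measurableSet_Ioi fun t ht => ?_)
    · exact (continuousOn_const.mul (hcont.rpow_const fun _ _ => .inr hc0.le)).aestronglyMeasurable
        measurableSet_Ioi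
    · have hft : 0 < f t := hpos t ht
      exact (norm_of_nonneg (by positivity)).trans_le (hlt t ht).le
  calc c * ∫ t in Ioi a, f t ^ c = ∫ t in Ioi a, c * f t ^ c := (integral_const_mul c _).symm
    _ < ∫ t in Ioi a, c * (f t * (∫ s in Ioi t, f s) ^ (c - 1)) :=
        setIntegral_lt_setIntegral_of_forall_lt measurableSet_Ioi (by simp) hint_rpow hint hlt
    _ = (∫ t in Ioi a, f t) ^ c := hint_eq

end TailIntegral

section Gamma

variable {x c : ℝ}

lemma integrableOn_exp_neg_mul_rpow_Ioi (hx : -1 < x) :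
    IntegrableOn (fun t => exp (-t) * t ^ x) (Ioi 0) := by
  simpa using GammaIntegral_convergent (s := x + 1) (by linarith)

lemma Gamma_add_one_eq_integral (hx : -1 < x) :
    Gamma (x + 1) = ∫ t in Ioi 0, exp (-t) * t ^ x := by
  simpa using Gamma_eq_integral (s := x + 1) (by linarith)

lemma exp_neg_mul_rpow_lt_setIntegral_Ioi {t : ℝ} (hx : 0 < x) (ht : 0 ≤ t) :
    exp (-t) * t ^ x < ∫ s in Ioi t, exp (-s) * s ^ x := by
  rw [← integral_exp_neg_Ioi t, ← integral_mul_const]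
  refine setIntegral_lt_setIntegral_of_forall_lt measurableSet_Ioi (by simp)
    ((integrableOn_exp_neg_Ioi t).mul_const _)
    ((integrableOn_exp_neg_mul_rpow_Ioi (by linarith)).mono_set (Ioi_subset_Ioi ht))
    fun s hts => ?_
  have hlt : t ^ x < s ^ x := rpow_lt_rpow ht hts hx
  gcongr

lemma exp_neg_mul_rpow_self_lt_Gamma_add_one (hx : 0 < x) : exp (-x) * x ^ x < Gamma (x + 1) := by
  have hx' : -1 < x := by linarith
  calc exp (-x) * x ^ x < ∫ t in Ioi x, exp (-t) * t ^ x :=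
        exp_neg_mul_rpow_lt_setIntegral_Ioi hx hx.le
    _ ≤ ∫ t in Ioi 0, exp (-t) * t ^ x := by
        refine setIntegral_mono_set (integrableOn_exp_neg_mul_rpow_Ioi hx')
          (ae_restrict_of_forall_mem measurableSet_Ioi fun t ht => ?_)
          (Ioi_subset_Ioi hx.le).eventuallyLE
        exact mul_nonneg (exp_nonneg _) (rpow_nonneg (le_of_lt ht) _)
    _ = Gamma (x + 1) := (Gamma_add_one_eq_integral hx').symm

lemma Gamma_mul_add_one_eq_integral_rpow (hc : 0 < c) (hcx : -1 < c * x) :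
    Gamma (c * x + 1) = c ^ (c * x) * (c * ∫ t in Ioi 0, (exp (-t) * t ^ x) ^ c) := by
  have hintegrand : ∀ t ∈ Ioi (0 : ℝ),
      (exp (-t) * t ^ x) ^ c = t ^ (c * x + 1 - 1) * exp (-(c * t)) := fun t ht => by
    have ht0 : 0 ≤ t := le_of_lt ht
    rw [mul_rpow (exp_nonneg _) (rpow_nonneg ht0 _), ← exp_mul, ← rpow_mul ht0,
      add_sub_cancel_right, mul_comm x c, neg_mul, mul_comm t c, mul_comm]
  rw [setIntegral_congr_fun measurableSet_Ioi hintegrand,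
    integral_rpow_mul_exp_neg_mul_Ioi (by linarith) hc, ← mul_assoc, ← mul_assoc,
    ← rpow_add_one hc.ne', ← mul_rpow hc.le (by positivity), mul_one_div_cancel hc.ne', one_rpow,
    one_mul]

lemma Gamma_mul_add_one_lt (hx : 0 < x) (hc : 1 < c) :
    Gamma (c * x + 1) < c ^ (c * x) * Gamma (x + 1) ^ c := by
  have hc0 : 0 < c := one_pos.trans hc
  have hx' : -1 < x := by linarith
  have hcont : Continuous fun t => exp (-t) * t ^ x :=
    continuous_neg.rexp.mul (continuous_id.rpow_const fun _ => .inr hx.le)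
  rw [Gamma_mul_add_one_eq_integral_rpow hc0 (by linarith [mul_pos hc0 hx]),
    Gamma_add_one_eq_integral hx']
  gcongr
  exact mul_integral_rpow_lt_rpow_integral_of_lt_tail hc (integrableOn_exp_neg_mul_rpow_Ioi hx')
    hcont.continuousOn (fun t ht => mul_pos (exp_pos _) (rpow_pos_of_pos ht _))
    fun t ht => exp_neg_mul_rpow_lt_setIntegral_Ioi hx (le_of_lt ht)

lemma log_sub_one_lt_hGamma (hx : 0 < x) : log x - 1 < hGamma x := by
  have hlog : -x + x * log x < log (Gamma (x + 1)) := by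
    have h := log_lt_log (by positivity) (exp_neg_mul_rpow_self_lt_Gamma_add_one hx)
    rwa [log_mul (by positivity) (by positivity), log_exp, log_rpow hx] at h
  rw [hGamma, lt_div_iff₀ hx]
  linarith

lemma hGamma_mul_sub_hGamma_lt_log (hx : 0 < x) (hc : 1 < c) :
    hGamma (c * x) - hGamma x < log c := by
  have hc0 : 0 < c := one_pos.trans hc
  have hcx : 0 < c * x := mul_pos hc0 hx
  have hΓ : 0 < Gamma (x + 1) := Gamma_pos_of_pos (by linarith)
  have hlog : log (Gamma (c * x + 1)) < c * x * log c + c * log (Gamma (x + 1)) := by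
    have h := log_lt_log (Gamma_pos_of_pos (by linarith)) (Gamma_mul_add_one_lt hx hc)
    rwa [log_mul (by positivity) (by positivity), log_rpow hc0, log_rpow hΓ] at h
  rw [sub_lt_iff_lt_add, hGamma, hGamma, div_lt_iff₀ hcx]
  refine hlog.trans_eq ?_
  field_simp

end Gamma

theorem aSeq_lt_one_and_tendsto_one_general (α : ℝ) (hα : 0 < α) :
    (∀ c : ℝ, 1 < c → (hGamma (c * α) - hGamma α) / log c < 1) ∧
    Tendsto (fun c : ℝ => (hGamma (c * α) - hGamma α) / log c) atTop (𝓝 1) := by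
  have hupper : ∀ c : ℝ, 1 < c → (hGamma (c * α) - hGamma α) / log c < 1 := fun c hc =>
    (div_lt_one (log_pos hc)).2 (hGamma_mul_sub_hGamma_lt_log hα hc)
  have hlower : ∀ c : ℝ, 1 < c →
      1 + (log α - 1 - hGamma α) / log c ≤ (hGamma (c * α) - hGamma α) / log c := fun c hc => by
    have hc0 : 0 < c := one_pos.trans hc
    have h := log_sub_one_lt_hGamma (mul_pos hc0 hα)
    rw [log_mul hc0.ne' hα.ne'] at h
    rw [one_add_div (log_pos hc).ne', div_le_div_iff_of_pos_right (log_pos hc)]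
    linarith
  have hlim : Tendsto (fun c => 1 + (log α - 1 - hGamma α) / log c) atTop (𝓝 1) := by
    simpa using (tendsto_log_atTop.const_div_atTop (log α - 1 - hGamma α)).const_add 1
  exact ⟨hupper, tendsto_of_tendsto_of_tendsto_of_le_of_le' hlim tendsto_const_nhds
    ((eventually_gt_atTop 1).mono hlower)
    ((eventually_gt_atTop 1).mono fun c hc => (hupper c hc).le)⟩

/-- For fixed `α > 0`, the sequence `a_n = (h(nα) - h(α)) / log n` (`n ≥ 2`) satisfies
`a_n < 1` for every `n ≥ 2` and `a_n → 1` as `n → ∞`. -/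
theorem aSeq_lt_one_and_tendsto_one (α : ℝ) (hα : 0 < α) :
    (∀ n : ℕ, 2 ≤ n → (hGamma (n * α) - hGamma α) / Real.log n < 1) ∧
    Tendsto (fun n : ℕ => (hGamma (n * α) - hGamma α) / Real.log n) atTop (nhds 1) := by
  obtain ⟨hlt, hlim⟩ := aSeq_lt_one_and_tendsto_one_general α hα
  exact ⟨fun n hn => hlt n (mod_cast hn), hlim.comp tendsto_natCast_atTop_atTop⟩
end

section
/- Let X_1 be a positive random variable with strictly positive density f on (0,∞) satisfying lim_{x→∞} (−log f(x))/x^β = 1 for some β > 0. Then for every constant C > 1, lim_{x→∞} P(X_1 > x)/P(X_1 > x/C) = 0. -/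
open MeasureTheory Filter Real

/-!
Since `-log f(x) ~ x ^ β`, the difference `log f(x / C) - log f(x)` grows like
`(1 - C ^ (-β)) * x ^ β`, so `f(x) / f(x / C) → 0`. Integrating over `(x, ∞)` transfers this to
the tails, because `∫_x^∞ f(t / C) dt = C * ∫_{x / C}^∞ f(t) dt`.
-/

open scoped ENNReal Topology

theorem tendsto_sub_comp_div_atTop_of_tendsto_div_rpow {h : ℝ → ℝ} {β c C : ℝ} (hβ : 0 < β)
    (hc : 0 < c) (hC : 1 < C) (hh : Tendsto (fun x => h x / x ^ β) atTop (𝓝 c)) :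
    Tendsto (fun x => h x - h (x / C)) atTop atTop := by
  have hC₀ : 0 < C := one_pos.trans hC
  have hscaled : Tendsto (fun x => h (x / C) / (x / C) ^ β) atTop (𝓝 c) :=
    hh.comp (tendsto_id.atTop_div_const hC₀)
  have hgap : 0 < c - (C ^ β)⁻¹ * c :=
    sub_pos.2 (mul_lt_of_lt_one_left hc (inv_lt_one_of_one_lt₀ (one_lt_rpow hC hβ)))
  refine ((tendsto_rpow_atTop hβ).atTop_mul_pos hgap
    (hh.sub (hscaled.const_mul (C ^ β)⁻¹))).congr' ?_
  filter_upwards [eventually_gt_atTop 0] with x hx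
  have : 0 < x ^ β := rpow_pos_of_pos hx β
  have : 0 < C ^ β := rpow_pos_of_pos hC₀ β
  rw [div_rpow hx.le hC₀.le]
  field_simp

theorem tendsto_div_comp_div_zero_of_tendsto_neg_log_div_rpow {f : ℝ → ℝ} {β c C : ℝ}
    (hpos : ∀ᶠ x in atTop, 0 < f x) (hβ : 0 < β) (hc : 0 < c) (hC : 1 < C)
    (hlog : Tendsto (fun x => -log (f x) / x ^ β) atTop (𝓝 c)) :
    Tendsto (fun x => f x / f (x / C)) atTop (𝓝 0) := by
  have hdiv : Tendsto (fun x : ℝ => x / C) atTop atTop :=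
    tendsto_id.atTop_div_const (one_pos.trans hC)
  refine (tendsto_exp_neg_atTop_nhds_zero.comp
    (tendsto_sub_comp_div_atTop_of_tendsto_div_rpow hβ hc hC hlog)).congr' ?_
  filter_upwards [hpos, hdiv.eventually hpos] with x hx hxC
  calc exp (-(-log (f x) - -log (f (x / C)))) = exp (log (f x) - log (f (x / C))) := by ring_nf
    _ = f x / f (x / C) := by rw [exp_sub, exp_log hx, exp_log hxC]

theorem tendsto_setLIntegral_Ioi_div_zero {α : Type*} [LinearOrder α] [TopologicalSpace α]
    [OrderClosedTopology α] [MeasurableSpace α] [OpensMeasurableSpace α] {μ : Measure α}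
    {f g : α → ℝ≥0∞} (hfg : Tendsto (fun x => f x / g x) atTop (𝓝 0)) :
    Tendsto (fun x => (∫⁻ t in Set.Ioi x, f t ∂μ) / ∫⁻ t in Set.Ioi x, g t ∂μ) atTop (𝓝 0) := by
  refine ENNReal.tendsto_nhds_zero.2 fun ε hε => ?_
  obtain ⟨δ, hδ₀, hδε⟩ := exists_between hε
  have hδ_top : δ ≠ ∞ := hδε.ne_top
  have hle : ∀ᶠ x in atTop, f x ≤ δ * g x :=
    (hfg.eventually_le_const hδ₀).mono fun x hx =>
      (ENNReal.div_le_iff_le_mul (.inr hδ_top) (.inr hδ₀.ne')).1 hx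
  filter_upwards [eventually_forall_ge_atTop.2 hle] with x hx
  refine (ENNReal.div_le_of_le_mul ?_).trans hδε.le
  calc ∫⁻ t in Set.Ioi x, f t ∂μ ≤ ∫⁻ t in Set.Ioi x, δ * g t ∂μ :=
        setLIntegral_mono' measurableSet_Ioi fun t ht => hx t (le_of_lt ht)
    _ = δ * ∫⁻ t in Set.Ioi x, g t ∂μ := lintegral_const_mul' δ g hδ_top

theorem setLIntegral_preimage_comp_div {C : ℝ} (hC : C ≠ 0) (g : ℝ → ℝ≥0∞) (s : Set ℝ) :
    ∫⁻ t in (· / C) ⁻¹' s, g (t / C) = ENNReal.ofReal |C| * ∫⁻ t in s, g t := by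
  have hemb : MeasurableEmbedding (· / C : ℝ → ℝ) := by
    simpa only [div_eq_mul_inv] using measurableEmbedding_mulRight₀ (inv_ne_zero hC)
  have hmap : Measure.map (· / C) volume = ENNReal.ofReal |C| • (volume : Measure ℝ) := by
    simpa only [div_eq_mul_inv, inv_inv] using Real.map_volume_mul_right (inv_ne_zero hC)
  calc ∫⁻ t in (· / C) ⁻¹' s, g (t / C)
      = ∫⁻ t in s, g t ∂(Measure.map (· / C) volume) := by
        rw [hemb.restrict_map, hemb.lintegral_map]
    _ = ENNReal.ofReal |C| * ∫⁻ t in s, g t := by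
        rw [hmap, Measure.restrict_smul, lintegral_smul_measure, smul_eq_mul]

theorem tendsto_setLIntegral_Ioi_div_Ioi_div_zero {C : ℝ} (hC : 0 < C) {g : ℝ → ℝ≥0∞}
    (hg : Tendsto (fun x => g x / g (x / C)) atTop (𝓝 0)) :
    Tendsto (fun x => (∫⁻ t in Set.Ioi x, g t) / ∫⁻ t in Set.Ioi (x / C), g t)
      atTop (𝓝 0) := by
  have hscale (x : ℝ) : ∫⁻ t in Set.Ioi x, g (t / C) =
      ENNReal.ofReal C * ∫⁻ t in Set.Ioi (x / C), g t := by
    have hpre : (· / C) ⁻¹' Set.Ioi (x / C) = Set.Ioi x := by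
      ext t
      exact div_lt_div_iff_of_pos_right hC
    simpa only [hpre, abs_of_pos hC] using
      setLIntegral_preimage_comp_div hC.ne' g (Set.Ioi (x / C))
  have hC_ne_zero : ENNReal.ofReal C ≠ 0 := (ENNReal.ofReal_pos.2 hC).ne'
  have hlim := ENNReal.Tendsto.const_mul (tendsto_setLIntegral_Ioi_div_zero (μ := volume) hg)
    (.inr (ENNReal.ofReal_ne_top (r := C)))
  rw [mul_zero] at hlim
  refine hlim.congr fun x => ?_
  rw [hscale, ← mul_div_assoc, ENNReal.mul_div_mul_left _ _ hC_ne_zero ENNReal.ofReal_ne_top]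

theorem measure_preimage_eq_setLIntegral {Ω E : Type*} [MeasurableSpace Ω] [MeasurableSpace E]
    {P : Measure Ω} {X : Ω → E} (hX : AEMeasurable X P) {μ : Measure E} {g : E → ℝ≥0∞}
    (hdist : Measure.map X P = μ.withDensity g) {s : Set E} (hs : MeasurableSet s) :
    P (X ⁻¹' s) = ∫⁻ t in s, g t ∂μ := by
  rw [← Measure.map_apply_of_aemeasurable hX hs, hdist, withDensity_apply _ hs]

theorem tendsto_tail_ratio_zero_general {Ω : Type*} [MeasurableSpace Ω] {P : Measure Ω}
    {X : Ω → ℝ} (hX : AEMeasurable X P) {f : ℝ → ℝ}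
    (hdist : Measure.map X P = volume.withDensity (fun x => ENNReal.ofReal (f x)))
    (hpos : ∀ᶠ x in atTop, 0 < f x) {β c : ℝ} (hβ : 0 < β) (hc : 0 < c)
    (htail : Tendsto (fun x => -log (f x) / x ^ β) atTop (𝓝 c)) {C : ℝ} (hC : 1 < C) :
    Tendsto (fun x => (P {ω | x < X ω}).toReal / (P {ω | x / C < X ω}).toReal) atTop (𝓝 0) := by
  have hC₀ : 0 < C := one_pos.trans hC
  have hdensity : Tendsto (fun x => ENNReal.ofReal (f x) / ENNReal.ofReal (f (x / C)))
      atTop (𝓝 0) := by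
    have hlim := ENNReal.tendsto_ofReal
      (tendsto_div_comp_div_zero_of_tendsto_neg_log_div_rpow hpos hβ hc hC htail)
    rw [ENNReal.ofReal_zero] at hlim
    refine hlim.congr' ?_
    filter_upwards [(tendsto_id.atTop_div_const hC₀).eventually hpos] with x hx
    exact ENNReal.ofReal_div_of_pos hx
  have hprob (x : ℝ) : P {ω | x < X ω} = ∫⁻ t in Set.Ioi x, ENNReal.ofReal (f t) :=
    measure_preimage_eq_setLIntegral hX hdist measurableSet_Ioi
  have hratio := (ENNReal.tendsto_toReal ENNReal.zero_ne_top).comp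
    (tendsto_setLIntegral_Ioi_div_Ioi_div_zero hC₀ hdensity)
  simpa only [Function.comp_def, hprob, ENNReal.toReal_div, ENNReal.toReal_zero] using hratio

/-- Let `X` be a positive random variable with strictly positive density `f` on `(0,∞)`
satisfying `-log f(x) / x^β → 1` as `x → ∞` for some `β > 0`. Then for every `C > 1`,
`P(X > x) / P(X > x/C) → 0` as `x → ∞`. -/
theorem tendsto_tail_ratio_zero
    {Ω : Type*} [MeasurableSpace Ω] (P : Measure Ω) [IsProbabilityMeasure P]
    (X : Ω → ℝ) (hmeas : Measurable X)
    (f : ℝ → ℝ)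
    (hdist : Measure.map X P = volume.withDensity (fun x => ENNReal.ofReal (f x)))
    (hsupp : ∀ x ≤ (0 : ℝ), f x = 0)
    (hpos : ∀ x > (0 : ℝ), 0 < f x)
    (β : ℝ) (hβ : 0 < β)
    (htail : Tendsto (fun x => -Real.log (f x) / x ^ β) atTop (nhds 1)) :
    ∀ C : ℝ, 1 < C →
      Tendsto (fun x => (P {ω | x < X ω}).toReal / (P {ω | x / C < X ω}).toReal)
        atTop (nhds 0) := by
  intro C hC
  exact tendsto_tail_ratio_zero_general hmeas.aemeasurable hdist
    ((eventually_gt_atTop 0).mono hpos) hβ one_pos htail hC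
end
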